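/- arXiv:2212.07857 — 4 statements merged into one kernel-verified Lean document; each statement's English description precedes it below -/
import Mathlib

section
/- Let A = (α, β, q) be an octonionic Hermitian 2×2 matrix (α, β ∈ ℝ, q ∈ 𝕆). Then A is positive definite if and only if α > 0 and det A = α·β − |q|² > 0. (Octonionic Sylvester criterion, Proposition 5.7.) -/
noncomputable section

open scoped Quaternion

/-- The octonions, realized as pairs of quaternions (Cayley–Dickson). -/
abbrev Oct : Type := ℍ[ℝ] × ℍ[ℝ]

/-- Octonionic multiplication: (x,y)·(w,z) = (xw − z̄y, zx + yw̄). -/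
def omul (a b : Oct) : Oct :=
  (a.1 * b.1 - star b.2 * a.2, b.2 * a.1 + a.2 * star b.1)

/-- Octonionic conjugation. -/
def oconj (a : Oct) : Oct := (star a.1, -a.2)

/-- Real part of an octonion. -/
def oRe (a : Oct) : ℝ := a.1.re

/-- Squared norm |q|² = Re(q·q̄). -/
def onSq (a : Oct) : ℝ := oRe (omul a (oconj a))

/-- Octonionic Hermitian 2×2 matrix: (α, β, q) represents [[α, q],[q̄, β]]. -/
abbrev Herm : Type := ℝ × ℝ × Oct

/-- Determinant of an octonionic Hermitian 2×2 matrix. -/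
def detH (A : Herm) : ℝ := A.1 * A.2.1 - onSq A.2.2

/-- The quadratic form ξ ↦ Re(ξ*Aξ). -/
def qform (A : Herm) (ξ : Oct × Oct) : ℝ :=
  A.1 * onSq ξ.1 + A.2.1 * onSq ξ.2 + 2 * oRe (omul (oconj ξ.1) (omul A.2.2 ξ.2))

/-- Positive definiteness. -/
def PosDefH (A : Herm) : Prop := ∀ ξ : Oct × Oct, ξ ≠ 0 → 0 < qform A ξ

/-- Nonnegative definiteness. -/
def NonnegDefH (A : Herm) : Prop := ∀ ξ : Oct × Oct, 0 ≤ qform A ξ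

/-!
Completing the square gives `α Re(ξ*Aξ) = |α ξ₁ + q ξ₂|² + det A |ξ₂|²`. Apart from the
polarization of the norm this uses only the composition law `|q ξ₂| = |q| |ξ₂|`, so the lack of
associativity does no harm. The vector `ξ = (-q, α)` annihilates the square and isolates `det A`.
-/

/-- The unit `(1, 0)` of the octonions, which is not the unit `1 = (1, 1)` that `Oct` inherits from
the product ring structure. -/
def oone : Oct := (1, 0)

theorem oone_ne_zero : oone ≠ 0 := by
  simp [oone]

theorem omul_zero (a : Oct) : omul a 0 = 0 := by
  simp [omul]

theorem omul_oone (a : Oct) : omul a oone = a := by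
  simp [omul, oone]

theorem omul_smul (r : ℝ) (a b : Oct) : omul a (r • b) = r • omul a b := by
  simp [omul, smul_sub]

theorem smul_omul (r : ℝ) (a b : Oct) : omul (r • a) b = r • omul a b := by
  simp [omul, smul_sub]

theorem oconj_smul (r : ℝ) (a : Oct) : oconj (r • a) = r • oconj a := by
  simp [oconj]

theorem oRe_smul (r : ℝ) (a : Oct) : oRe (r • a) = r * oRe a := by
  simp [oRe]

theorem quaternion_re_mul_comm {R : Type*} [CommRing R] (x y : ℍ[R]) : (x * y).re = (y * x).re := by
  simp only [Quaternion.re_mul]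
  ring

theorem onSq_eq_normSq_add_normSq (a : Oct) :
    onSq a = Quaternion.normSq a.1 + Quaternion.normSq a.2 := by
  simp [onSq, oRe, omul, oconj, Quaternion.normSq_def]

theorem onSq_zero : onSq 0 = 0 := by
  simp [onSq_eq_normSq_add_normSq]

theorem onSq_oone : onSq oone = 1 := by
  simp [onSq_eq_normSq_add_normSq, oone]

theorem onSq_nonneg (a : Oct) : 0 ≤ onSq a := by
  rw [onSq_eq_normSq_add_normSq]
  exact add_nonneg Quaternion.normSq_nonneg Quaternion.normSq_nonneg

theorem onSq_eq_zero {a : Oct} : onSq a = 0 ↔ a = 0 := by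
  rw [onSq_eq_normSq_add_normSq,
    add_eq_zero_iff_of_nonneg Quaternion.normSq_nonneg Quaternion.normSq_nonneg,
    Quaternion.normSq_eq_zero, Quaternion.normSq_eq_zero, Prod.ext_iff, Prod.fst_zero,
    Prod.snd_zero]

theorem onSq_pos {a : Oct} (ha : a ≠ 0) : 0 < onSq a :=
  (onSq_nonneg a).lt_of_ne' (onSq_eq_zero.not.mpr ha)

theorem onSq_smul (r : ℝ) (a : Oct) : onSq (r • a) = r ^ 2 * onSq a := by
  simp only [onSq_eq_normSq_add_normSq, Prod.smul_fst, Prod.smul_snd, Quaternion.normSq_smul]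
  ring

theorem oRe_omul_oconj (a b : Oct) :
    oRe (omul (oconj a) b) = (a.1 * star b.1).re + (a.2 * star b.2).re := by
  have re_star_mul : (star a.1 * b.1).re = (a.1 * star b.1).re := by
    rw [← Quaternion.re_star, star_mul, star_star, quaternion_re_mul_comm]
  simp only [oRe, omul, oconj, mul_neg, sub_neg_eq_add, Quaternion.re_add, re_star_mul,
    quaternion_re_mul_comm (star b.2)]

theorem onSq_add (a b : Oct) :
    onSq (a + b) = onSq a + 2 * oRe (omul (oconj a) b) + onSq b := by
  simp only [oRe_omul_oconj, onSq_eq_normSq_add_normSq, Prod.fst_add, Prod.snd_add,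
    Quaternion.normSq_add]
  ring

theorem onSq_omul (a b : Oct) : onSq (omul a b) = onSq a * onSq b := by
  obtain ⟨x, y⟩ := a
  obtain ⟨w, z⟩ := b
  have cross_terms_cancel :
      (x * w * star (star z * y)).re = (z * x * star (y * star w)).re := by
    calc (x * w * star (star z * y)).re
        = ((x * w * star y) * z).re := by rw [star_mul, star_star, mul_assoc (x * w)]
      _ = (z * (x * w * star y)).re := quaternion_re_mul_comm _ _
      _ = (z * x * star (y * star w)).re := by simp only [star_mul, star_star, mul_assoc]
  simp only [onSq_eq_normSq_add_normSq, omul]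
  rw [sub_eq_add_neg, Quaternion.normSq_add, Quaternion.normSq_add, star_neg, mul_neg,
    Quaternion.re_neg, cross_terms_cancel]
  simp only [Quaternion.normSq_neg, map_mul, Quaternion.normSq_star]
  ring

theorem qform_left (A : Herm) (a : Oct) : qform A (a, 0) = A.1 * onSq a := by
  simp [qform, omul_zero, onSq_zero, oRe]

theorem fst_mul_qform (A : Herm) (ξ : Oct × Oct) :
    A.1 * qform A ξ = onSq (A.1 • ξ.1 + omul A.2.2 ξ.2) + detH A * onSq ξ.2 := by
  rw [onSq_add, onSq_smul, onSq_omul, oconj_smul, smul_omul, oRe_smul, qform, detH]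
  ring

theorem PosDefH.fst_pos {A : Herm} (hA : PosDefH A) : 0 < A.1 := by
  have h := hA (oone, 0) (by simp [oone_ne_zero])
  rwa [qform_left, onSq_oone, mul_one] at h

theorem PosDefH.detH_pos {A : Herm} (hA : PosDefH A) : 0 < detH A := by
  have hα := hA.fst_pos
  have hξ : A.1 • oone ≠ 0 := smul_ne_zero hα.ne' oone_ne_zero
  have square_eq_zero : onSq (A.1 • -A.2.2 + omul A.2.2 (A.1 • oone)) = 0 := by
    rw [omul_smul, omul_oone, smul_neg, neg_add_cancel, onSq_zero]
  have h : 0 < A.1 * qform A (-A.2.2, A.1 • oone) :=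
    mul_pos hα (hA _ fun h0 ↦ hξ (congrArg Prod.snd h0))
  rw [fst_mul_qform, square_eq_zero, zero_add] at h
  exact pos_of_mul_pos_left h (onSq_nonneg _)

theorem posDefH_of_fst_pos_of_detH_pos {A : Herm} (hα : 0 < A.1) (hdet : 0 < detH A) :
    PosDefH A := by
  rintro ⟨a, b⟩ hξ
  rcases eq_or_ne b 0 with rfl | hb
  · have ha : a ≠ 0 := fun ha ↦ hξ (by rw [ha, Prod.mk_zero_zero])
    rw [qform_left]
    exact mul_pos hα (onSq_pos ha)
  · refine pos_of_mul_pos_right ?_ hα.le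
    rw [fst_mul_qform]
    exact add_pos_of_nonneg_of_pos (onSq_nonneg _) (mul_pos hdet (onSq_pos hb))

/-- Octonionic Sylvester criterion (Proposition 5.7): an octonionic Hermitian 2×2
matrix is positive definite iff its upper-left entry and its determinant are positive. -/
theorem sylvester_criterion (A : Herm) :
    PosDefH A ↔ 0 < A.1 ∧ 0 < detH A :=
  ⟨fun hA ↦ ⟨hA.fst_pos, hA.detH_pos⟩, fun h ↦ posDefH_of_fst_pos_of_detH_pos h.1 h.2⟩
end
end

section
/- For every traceless 2×2 matrix A with octonionic entries (a₁₁ + a₂₂ = 0) and every ξ ∈ 𝕆², the following identity of 2×2 octonionic matrices holds: (A*·ξ)·ξ* + ξ·(A*·ξ)* = A*·(ξ·ξ*) + (ξ·ξ*)·A. (The infinitesimal equivariance identity (20) proved in Lemma 6.7.) -/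
noncomputable section

open scoped Quaternion

/-- 2×2 matrices with octonionic entries. -/
abbrev Omat : Type := Fin 2 → Fin 2 → Oct

/-- Action of a 2×2 octonionic matrix on a column vector. -/
def matVec (A : Omat) (ξ : Fin 2 → Oct) : Fin 2 → Oct :=
  fun i => ∑ j, omul (A i j) (ξ j)

/-- Conjugate transpose A* of a 2×2 octonionic matrix. -/
def conjT (A : Omat) : Omat := fun i j => oconj (A j i)

/-- Product of 2×2 octonionic matrices. -/
def matMul (X Y : Omat) : Omat := fun i j => ∑ k, omul (X i k) (Y k j)

/-- The matrix ξ·η* with entries ξᵢ·conj(ηⱼ). -/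
def outer (ξ η : Fin 2 → Oct) : Omat := fun i j => omul (ξ i) (oconj (η j))

/-!
Subtracting the right-hand side from the left-hand side of the identity leaves only associators
`[a, b, c] = (ab)c - a(bc)`. The octonionic associator is alternating and changes sign when any one
argument is conjugated, so the `(i, j)` entry of the difference becomes `T i j - T j i` with
`T i j = ∑ k, [A k i, ξ k, ξ j]`. In size `2` the terms with a repeated `ξ` drop out, and
`T 0 1 - T 1 0 = [A 0 0 + A 1 1, ξ 0, ξ 1]`, which vanishes once the trace is real.
-/

theorem omul_add (a b c : Oct) : omul a (b + c) = omul a b + omul a c := by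
  ext1 <;> simp only [omul, Prod.fst_add, Prod.snd_add, star_add, mul_add, add_mul] <;> abel

theorem add_omul (a b c : Oct) : omul (a + b) c = omul a c + omul b c := by
  ext1 <;> simp only [omul, Prod.fst_add, Prod.snd_add, mul_add, add_mul] <;> abel

theorem real_omul (r : ℝ) (a : Oct) : omul ((r : ℍ[ℝ]), 0) a = r • a := by
  ext1 <;> simp [omul, Quaternion.coe_mul_eq_smul, Quaternion.mul_coe_eq_smul]

theorem oconj_oconj (a : Oct) : oconj (oconj a) = a := by
  simp [oconj]

theorem oconj_add (a b : Oct) : oconj (a + b) = oconj a + oconj b := by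
  ext1 <;> simp [oconj, add_comm]

theorem oconj_neg (a : Oct) : oconj (-a) = -oconj a := by
  ext1 <;> simp [oconj]

theorem oconj_sub (a b : Oct) : oconj (a - b) = oconj a - oconj b := by
  simp only [sub_eq_add_neg, oconj_add, oconj_neg]

theorem oconj_omul (a b : Oct) : oconj (omul a b) = omul (oconj b) (oconj a) := by
  simp [omul, oconj]

theorem add_oconj_self (a : Oct) : a + oconj a = (((2 * oRe a : ℝ) : ℍ[ℝ]), 0) := by
  ext1
  · exact Quaternion.self_add_star' a.1
  · exact add_neg_cancel a.2

theorem oconj_omul_self (a : Oct) : omul (oconj a) a = ((onSq a : ℍ[ℝ]), 0) := by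
  ext1 <;> simp [omul, oconj, onSq_eq_normSq_add_normSq, Quaternion.star_mul_self]

theorem oconj_omul_omul_self (a b : Oct) : omul (oconj a) (omul a b) = onSq a • b := by
  obtain ⟨x, y⟩ := a
  obtain ⟨w, z⟩ := b
  rw [onSq_eq_normSq_add_normSq, add_smul]
  ext1
  · calc star x * (x * w - star z * y) - star (z * x + y * star w) * -y
        = star x * x * w + w * (star y * y) := by
          simp only [star_add, star_mul, star_star]; noncomm_ring
      _ = Quaternion.normSq x • w + Quaternion.normSq y • w := by
          rw [Quaternion.star_mul_self, Quaternion.star_mul_self, Quaternion.coe_mul_eq_smul,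
            Quaternion.mul_coe_eq_smul]
  · calc (z * x + y * star w) * star x + -y * star (x * w - star z * y)
        = z * (x * star x) + y * star y * z := by
          simp only [star_sub, star_mul, star_star]; noncomm_ring
      _ = Quaternion.normSq x • z + Quaternion.normSq y • z := by
          rw [Quaternion.self_mul_star, Quaternion.self_mul_star, Quaternion.coe_mul_eq_smul,
            Quaternion.mul_coe_eq_smul]

/-- The octonionic associator `[a, b, c] = (ab)c - a(bc)`. Mathlib's `associator` does not apply,
since `*` on the product type `Oct` is the componentwise multiplication. -/
def oassoc (a b c : Oct) : Oct := omul (omul a b) c - omul a (omul b c)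

theorem oassoc_add_left (a a' b c : Oct) :
    oassoc (a + a') b c = oassoc a b c + oassoc a' b c := by
  simp only [oassoc, add_omul]
  abel

theorem oassoc_add_middle (a b b' c : Oct) :
    oassoc a (b + b') c = oassoc a b c + oassoc a b' c := by
  simp only [oassoc, add_omul, omul_add]
  abel

theorem oassoc_real_left (r : ℝ) (b c : Oct) : oassoc ((r : ℍ[ℝ]), 0) b c = 0 := by
  rw [oassoc, real_omul, real_omul, smul_omul, sub_self]

theorem oassoc_oconj_left (a b c : Oct) : oassoc (oconj a) b c = -oassoc a b c := by
  rw [eq_neg_iff_add_eq_zero, add_comm, ← oassoc_add_left, add_oconj_self, oassoc_real_left]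

theorem oassoc_self_left (a b : Oct) : oassoc a a b = 0 := by
  have h : oassoc (oconj a) a b = 0 := by
    rw [oassoc, oconj_omul_self, real_omul, oconj_omul_omul_self, sub_self]
  rwa [oassoc_oconj_left, neg_eq_zero] at h

theorem oassoc_swap_left (a b c : Oct) : oassoc b a c = -oassoc a b c := by
  have h := oassoc_self_left (a + b) c
  rw [oassoc_add_left, oassoc_add_middle, oassoc_add_middle, oassoc_self_left, oassoc_self_left,
    zero_add, add_zero] at h
  exact eq_neg_of_add_eq_zero_right h

theorem oconj_oassoc (a b c : Oct) :
    oconj (oassoc a b c) = -oassoc (oconj c) (oconj b) (oconj a) := by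
  simp only [oassoc, oconj_sub, oconj_omul, neg_sub]

theorem oassoc_swap_right (a b c : Oct) : oassoc a c b = -oassoc a b c := by
  have h := congrArg oconj (oassoc_swap_left (oconj c) (oconj b) (oconj a))
  simp only [oconj_neg, oconj_oassoc, oconj_oconj, neg_neg] at h
  rw [← h, neg_neg]

theorem oassoc_reverse (a b c : Oct) : oassoc c b a = -oassoc a b c := by
  rw [oassoc_swap_left, oassoc_swap_right, oassoc_swap_left a b, neg_neg]

theorem oassoc_self_right (a b : Oct) : oassoc a b b = 0 := by
  rw [oassoc_reverse, oassoc_self_left, neg_zero]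

theorem oassoc_oconj_middle (a b c : Oct) : oassoc a (oconj b) c = -oassoc a b c := by
  rw [oassoc_swap_left, oassoc_oconj_left, oassoc_swap_left a b, neg_neg]

theorem oassoc_oconj_right (a b c : Oct) : oassoc a b (oconj c) = -oassoc a b c := by
  rw [oassoc_swap_right, oassoc_oconj_middle, oassoc_swap_right a b, neg_neg]

theorem outer_matVec_sub_matMul_outer (A : Omat) (ξ η : Fin 2 → Oct) (i j : Fin 2) :
    outer (matVec A ξ) η i j - matMul A (outer ξ η) i j
      = ∑ k, oassoc (A i k) (ξ k) (oconj (η j)) := by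
  simp only [outer, matVec, matMul, oassoc, Fin.sum_univ_two, add_omul]
  abel

theorem matMul_outer_sub_outer_matVec (A : Omat) (ξ η : Fin 2 → Oct) (i j : Fin 2) :
    matMul (outer ξ η) A i j - outer ξ (matVec (conjT A) η) i j
      = ∑ k, oassoc (ξ i) (oconj (η k)) (A k j) := by
  simp only [outer, matVec, matMul, conjT, oassoc, Fin.sum_univ_two, oconj_add, oconj_omul,
    oconj_oconj, omul_add]
  abel

/-- The matrix `T` with entries `T i j = ∑ k, [A k i, ξ k, ξ j]`. The equivariance identity holds
for `A` and `ξ` exactly when `T` is symmetric. -/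
def assocMat (A : Omat) (ξ : Fin 2 → Oct) : Omat :=
  fun i j => ∑ k, oassoc (A k i) (ξ k) (ξ j)

theorem outer_conjT_matVec_sub_matMul_outer_self (A : Omat) (ξ : Fin 2 → Oct) (i j : Fin 2) :
    outer (matVec (conjT A) ξ) ξ i j - matMul (conjT A) (outer ξ ξ) i j = assocMat A ξ i j := by
  simp only [outer_matVec_sub_matMul_outer, conjT, assocMat, oassoc_oconj_left,
    oassoc_oconj_right, neg_neg]

theorem matMul_outer_self_sub_outer_conjT_matVec (A : Omat) (ξ : Fin 2 → Oct) (i j : Fin 2) :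
    matMul (outer ξ ξ) A i j - outer ξ (matVec (conjT A) ξ) i j = assocMat A ξ j i := by
  simp only [matMul_outer_sub_outer_matVec, assocMat, oassoc_oconj_middle,
    fun k => oassoc_reverse (A k j) (ξ k) (ξ i), neg_neg]

theorem assocMat_sub_swap (A : Omat) (ξ : Fin 2 → Oct) :
    assocMat A ξ 0 1 - assocMat A ξ 1 0 = oassoc (A 0 0 + A 1 1) (ξ 0) (ξ 1) := by
  simp only [assocMat, Fin.sum_univ_two, oassoc_self_right, oassoc_add_left, add_zero, zero_add,
    oassoc_swap_right (A 1 1) (ξ 0) (ξ 1), sub_neg_eq_add]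

theorem assocMat_symm_of_trace_real {A : Omat} {r : ℝ}
    (hA : A 0 0 + A 1 1 = ((r : ℍ[ℝ]), 0)) (ξ : Fin 2 → Oct) (i j : Fin 2) :
    assocMat A ξ i j = assocMat A ξ j i := by
  have h : assocMat A ξ 0 1 = assocMat A ξ 1 0 := by
    rw [← sub_eq_zero, assocMat_sub_swap, hA, oassoc_real_left]
  fin_cases i <;> fin_cases j
  exacts [rfl, h, h.symm, rfl]

theorem infinitesimal_equivariance_general (A : Omat) (r : ℝ)
    (hA : A 0 0 + A 1 1 = ((r : ℍ[ℝ]), 0)) (ξ : Fin 2 → Oct) :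
    outer (matVec (conjT A) ξ) ξ + outer ξ (matVec (conjT A) ξ)
      = matMul (conjT A) (outer ξ ξ) + matMul (outer ξ ξ) A := by
  funext i j
  have h : outer (matVec (conjT A) ξ) ξ i j - matMul (conjT A) (outer ξ ξ) i j
      = matMul (outer ξ ξ) A i j - outer ξ (matVec (conjT A) ξ) i j := by
    rw [outer_conjT_matVec_sub_matMul_outer_self, matMul_outer_self_sub_outer_conjT_matVec,
      assocMat_symm_of_trace_real hA]
  rwa [sub_eq_sub_iff_add_eq_add, add_comm (matMul _ _ i j)] at h

/-- The infinitesimal equivariance identity (20) of Lemma 6.7: for a traceless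
octonionic 2×2 matrix A and ξ ∈ 𝕆²,
(A*ξ)ξ* + ξ(A*ξ)* = A*(ξξ*) + (ξξ*)A. -/
theorem infinitesimal_equivariance (A : Omat) (hA : A 0 0 + A 1 1 = 0)
    (ξ : Fin 2 → Oct) :
    outer (matVec (conjT A) ξ) ξ + outer ξ (matVec (conjT A) ξ)
      = matMul (conjT A) (outer ξ ξ) + matMul (outer ξ ξ) A :=
  infinitesimal_equivariance_general A 0 (by rw [hA, Quaternion.coe_zero, Prod.mk_zero_zero]) ξ
end
end

section
/- For all octonions a, b, c ∈ 𝕆 one has (conj(a)·b)·c − b·(c·a) = conj(a)·(b·c) − (b·c)·a. (Identity (21) proved inside Lemma 6.7.) -/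
noncomputable section

open scoped Quaternion

/-! In an alternative ring the associator `[x, y, z] = (xy)z - x(yz)` changes sign under
transposition of two arguments, hence is invariant under rotation. Since `a + ā` is real,
`[ā, b, c] = -[a, b, c] = -[b, c, a]`, which is the identity with its terms rearranged.

The octonions are alternative because `(āa)b = ā(ab)`, a consequence of the centrality of the
quaternion norms `x̄x`. As `a + ā` is real, this amounts to the left alternative law, and
conjugation turns it into the right one. -/

section Alternative

variable {R : Type*} [NonUnitalNonAssocRing R]

variable (R) in
/-- Alternative rings: `(xx)y = x(xy)` and `(xy)y = x(yy)`, stated as the vanishing of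
associators. -/
structure IsAlternativeRing : Prop where
  left_alternative (x y : R) : associator x x y = 0
  right_alternative (x y : R) : associator x y y = 0

theorem star_associator [StarRing R] (x y z : R) :
    star (associator x y z) = -associator (star z) (star y) (star x) := by
  simp only [associator_apply, star_sub, star_mul, neg_sub]

theorem associator_add_left (w x y z : R) :
    associator (w + x) y z = associator w y z + associator x y z := by
  simp only [associator_apply, add_mul]
  abel

namespace IsAlternativeRing

theorem associator_swap_left (hR : IsAlternativeRing R) (x y z : R) :
    associator y x z = -associator x y z := by
  have polarized : AddMonoidHom.associator (x + y) (x + y) z = 0 := hR.left_alternative _ _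
  simp only [map_add, AddMonoidHom.add_apply, AddMonoidHom.associator_apply,
    hR.left_alternative, zero_add, add_zero] at polarized
  exact eq_neg_of_add_eq_zero_left polarized

theorem associator_swap_right (hR : IsAlternativeRing R) (x y z : R) :
    associator x z y = -associator x y z := by
  have polarized : AddMonoidHom.associator x (y + z) (y + z) = 0 := hR.right_alternative _ _
  simp only [map_add, AddMonoidHom.add_apply, AddMonoidHom.associator_apply,
    hR.right_alternative, zero_add, add_zero] at polarized
  exact eq_neg_of_add_eq_zero_left polarized

theorem associator_rotate (hR : IsAlternativeRing R) (x y z : R) :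
    associator y z x = associator x y z := by
  rw [hR.associator_swap_right y x z, hR.associator_swap_left x y z, neg_neg]

theorem of_associator_star [StarRing R]
    (trace : ∀ x y z : R, associator (x + star x) y z = 0)
    (norm : ∀ x y : R, associator (star x) x y = 0) : IsAlternativeRing R := by
  have left (x y : R) : associator x x y = 0 := by
    simpa only [associator_add_left, norm, add_zero] using trace x x y
  refine ⟨left, fun x y ↦ star_injective ?_⟩
  rw [star_associator, left, neg_zero, star_zero]

end IsAlternativeRing

theorem conj_mul_identity_general (hR : IsAlternativeRing R) {a a' b c : R}
    (trace : associator (a + a') b c = 0) :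
    a' * b * c - b * (c * a) = a' * (b * c) - b * c * a := by
  have antisymm : associator a' b c = -associator b c a := by
    rw [hR.associator_rotate a b c, eq_neg_iff_add_eq_zero, add_comm, ← associator_add_left, trace]
  rw [associator_apply, associator_apply, neg_sub] at antisymm
  rwa [sub_eq_sub_iff_sub_eq_sub]

end Alternative

/-- The Cayley–Dickson double of a ring with involution, multiplied by the formula of `omul`,
so that `Oct` with `omul` and `oconj` is definitionally `CayleyDickson ℍ[ℝ]`.
It is a type synonym of `A × A` because the latter carries the componentwise product. -/
def CayleyDickson (A : Type*) : Type _ := A × A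

namespace CayleyDickson

variable {A : Type*}

@[ext]
theorem ext {p q : CayleyDickson A} (fst : p.1 = q.1) (snd : p.2 = q.2) : p = q :=
  Prod.ext fst snd

variable [NonUnitalRing A]

instance : AddCommGroup (CayleyDickson A) := inferInstanceAs (AddCommGroup (A × A))

@[simp] theorem fst_zero : (0 : CayleyDickson A).1 = 0 := rfl

@[simp] theorem snd_zero : (0 : CayleyDickson A).2 = 0 := rfl

@[simp] theorem fst_add (p q : CayleyDickson A) : (p + q).1 = p.1 + q.1 := rfl

@[simp] theorem snd_add (p q : CayleyDickson A) : (p + q).2 = p.2 + q.2 := rfl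

variable [StarRing A]

instance : Mul (CayleyDickson A) where
  mul p q := (p.1 * q.1 - star q.2 * p.2, q.2 * p.1 + p.2 * star q.1)

instance : Star (CayleyDickson A) where
  star p := (star p.1, -p.2)

@[simp] theorem fst_mul (p q : CayleyDickson A) : (p * q).1 = p.1 * q.1 - star q.2 * p.2 := rfl

@[simp] theorem snd_mul (p q : CayleyDickson A) : (p * q).2 = q.2 * p.1 + p.2 * star q.1 := rfl

@[simp] theorem fst_star (p : CayleyDickson A) : (star p).1 = star p.1 := rfl

@[simp] theorem snd_star (p : CayleyDickson A) : (star p).2 = -p.2 := rfl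

instance : NonUnitalNonAssocRing (CayleyDickson A) where
  left_distrib p q r := by
    ext <;> simp only [fst_add, snd_add, fst_mul, snd_mul, star_add, mul_add, add_mul] <;> abel
  right_distrib p q r := by
    ext <;> simp only [fst_add, snd_add, fst_mul, snd_mul, mul_add, add_mul] <;> abel
  zero_mul p := by ext <;> simp
  mul_zero p := by ext <;> simp

instance : StarRing (CayleyDickson A) where
  star_involutive p := by ext <;> simp
  star_mul p q := by ext <;> simp [add_comm]
  star_add p q := by ext <;> simp [add_comm]

theorem associator_eq_zero_of_commute {t : CayleyDickson A} (fst_central : ∀ y, Commute t.1 y)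
    (snd_eq_zero : t.2 = 0) (p q : CayleyDickson A) : associator t p q = 0 := by
  rw [associator_apply, sub_eq_zero]
  ext
  · have comm : star q.2 * (p.2 * t.1) = t.1 * (star q.2 * p.2) := by
      rw [← mul_assoc, fst_central]
    simp [snd_eq_zero, mul_sub, mul_assoc, comm]
  · simp [snd_eq_zero, add_mul, mul_assoc, (fst_central _).eq]

theorem fst_star_mul_self (p : CayleyDickson A) :
    (star p * p).1 = star p.1 * p.1 + star p.2 * p.2 := by
  simp

theorem snd_star_mul_self (p : CayleyDickson A) : (star p * p).2 = 0 := by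
  simp

theorem fst_star_mul_mul (p q : CayleyDickson A) :
    (star p * (p * q)).1 = star p.1 * p.1 * q.1 + q.1 * (star p.2 * p.2) := by
  simp only [fst_mul, snd_mul, fst_star, snd_star, star_add, star_mul, star_star, add_mul,
    mul_sub, mul_neg, mul_assoc]
  abel

theorem snd_star_mul_mul (p q : CayleyDickson A) :
    (star p * (p * q)).2 = q.2 * (p.1 * star p.1) + p.2 * star p.2 * q.2 := by
  simp [mul_assoc, mul_sub, add_mul]

end CayleyDickson

/-- The quadratic norms `x̄x` of a ring with involution are central; this is what makes its
Cayley–Dickson double alternative. -/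
def HasCentralNorms (A : Type*) [Mul A] [Star A] : Prop :=
  ∀ x y : A, Commute (star x * x) y

theorem hasCentralNorms_quaternion {R : Type*} [CommRing R] : HasCentralNorms ℍ[R] := by
  intro x y
  rw [Quaternion.star_mul_self]
  exact Quaternion.coe_commute _ _

namespace HasCentralNorms

variable {A : Type*} [Ring A] [StarRing A]

theorem commute_self_add_star (hA : HasCentralNorms A) (x y : A) : Commute (x + star x) y := by
  have polarized : x + star x = star (x + 1) * (x + 1) - star x * x - 1 := by
    rw [star_add, star_one]
    noncomm_ring
  rw [polarized]
  exact ((hA (x + 1) y).sub_left (hA x y)).sub_left (Commute.one_left y)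

theorem self_mul_star (hA : HasCentralNorms A) (x : A) : x * star x = star x * x := by
  have comm := hA.commute_self_add_star x x
  rw [commute_iff_eq, add_mul, mul_add] at comm
  exact (add_left_cancel comm).symm

theorem associator_self_add_star (hA : HasCentralNorms A) (p q r : CayleyDickson A) :
    associator (p + star p) q r = 0 :=
  CayleyDickson.associator_eq_zero_of_commute (hA.commute_self_add_star p.1)
    (add_neg_cancel p.2) q r

open CayleyDickson in
theorem associator_star_self (hA : HasCentralNorms A) (p q : CayleyDickson A) :
    associator (star p) p q = 0 := by
  rw [associator_apply, sub_eq_zero]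
  ext
  · rw [fst_star_mul_mul, fst_mul, fst_star_mul_self, snd_star_mul_self, mul_zero, sub_zero,
      add_mul, hA p.2 q.1]
  · rw [snd_star_mul_mul, snd_mul, fst_star_mul_self, snd_star_mul_self, zero_mul, add_zero,
      mul_add, hA.self_mul_star, hA.self_mul_star, hA p.2 q.2]

theorem isAlternativeRing (hA : HasCentralNorms A) : IsAlternativeRing (CayleyDickson A) :=
  .of_associator_star hA.associator_self_add_star hA.associator_star_self

end HasCentralNorms

/-- Identity (21) from the proof of Lemma 6.7:
(ā·b)·c − b·(c·a) = ā·(b·c) − (b·c)·a for all octonions a, b, c. -/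
theorem conj_mul_identity (a b c : Oct) :
    omul (omul (oconj a) b) c - omul b (omul c a)
      = omul (oconj a) (omul b c) - omul (omul b c) a :=
  have quat := hasCentralNorms_quaternion (R := ℝ)
  conj_mul_identity_general quat.isAlternativeRing (quat.associator_self_add_star a b c)
end
end

section
/- Let A and B be positive definite octonionic Hermitian 2×2 matrices. Then tr(A⁻¹·(A − B)) ≤ (2/√(det A))·(√(det A) − √(det B)), where A⁻¹ := (1/det A)·adj(A) (note det A > 0 and det B > 0). (Lemma 16.5.) -/
noncomputable section

open scoped Quaternion

/-- Embedding of ℝ into the octonions. -/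
def oR (r : ℝ) : Oct := ((r : ℍ[ℝ]), 0)

/-- The 2×2 octonionic matrix [[α, q],[q̄, β]] attached to a Hermitian triple. -/
def hermToMat (A : Herm) : Omat := ![![oR A.1, A.2.2], ![oconj A.2.2, oR A.2.1]]

/-- The 2×2 identity matrix. -/
def idMat : Omat := ![![oR 1, 0], ![0, oR 1]]

/-- The adjugate adj(A) = (β, α, −q) of an octonionic Hermitian matrix A = (α, β, q). -/
def adjH (A : Herm) : Herm := (A.2.1, A.1, -A.2.2)

/-- The real trace tr(X) = Re(X₁₁) + Re(X₂₂) of a 2×2 octonionic matrix. -/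
def otr (X : Omat) : ℝ := oRe (X 0 0) + oRe (X 1 1)

/-- The inverse A⁻¹ = (1/det A)·adj(A) of an octonionic Hermitian matrix. -/
def invH (A : Herm) : Herm := (detH A)⁻¹ • adjH A

/-!
Since `A⁻¹ = adj A / det A`, the trace `tr (A⁻¹ (A - B))` equals `2 (det A - D(A, B)) / det A`,
where the mixed discriminant `D` polarizes `det`, so the claim amounts to
`√(det A) √(det B) ≤ D(A, B)`. This is the reversed Cauchy–Schwarz inequality for the Lorentzian
quadratic form `(α, β, q) ↦ αβ - |q|²` on its forward cone; it follows from the usual Cauchy–Schwarz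
inequality and AM-GM. Non-associativity causes no trouble because the trace involves only real parts
of products of two octonions, which are Euclidean inner products. The sign of `det A` comes from
testing the quadratic form of `A` on the vectors `(-q, t)` with `t` real.
-/

theorem sqrt_mul_sqrt_le_sub_inner {E : Type*} [NormedAddCommGroup E] [InnerProductSpace ℝ E]
    {α β a b : ℝ} {q p : E} (hα : 0 ≤ α) (hβ : 0 ≤ β) (ha : 0 ≤ a) (hb : 0 ≤ b)
    (hq : ‖q‖ ^ 2 ≤ α * β) (hp : ‖p‖ ^ 2 ≤ a * b) :
    √(α * β - ‖q‖ ^ 2) * √(a * b - ‖p‖ ^ 2) ≤ (α * b + β * a) / 2 - inner ℝ q p := by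
  set s := √(α * β - ‖q‖ ^ 2)
  set t := √(a * b - ‖p‖ ^ 2)
  have hs : s ^ 2 + ‖q‖ ^ 2 = α * β := by rw [Real.sq_sqrt (sub_nonneg.2 hq)]; ring
  have ht : t ^ 2 + ‖p‖ ^ 2 = a * b := by rw [Real.sq_sqrt (sub_nonneg.2 hp)]; ring
  have hsq : (s * t + ‖q‖ * ‖p‖) ^ 2 ≤ ((α * b + β * a) / 2) ^ 2 :=
    calc (s * t + ‖q‖ * ‖p‖) ^ 2
        ≤ (s ^ 2 + ‖q‖ ^ 2) * (t ^ 2 + ‖p‖ ^ 2) := by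
          linarith [sq_nonneg (s * ‖p‖ - ‖q‖ * t)]
      _ = (α * b) * (β * a) := by rw [hs, ht]; ring
      _ ≤ ((α * b + β * a) / 2) ^ 2 := by linarith [sq_nonneg (α * b - β * a)]
  linarith [real_inner_le_norm q p, (abs_le_of_sq_le_sq' hsq (by positivity)).2]

theorem oRe_omul_oconj_s15 (a b : Oct) :
    oRe (omul a (oconj b)) = inner ℝ (WithLp.toLp 2 a) (WithLp.toLp 2 b) := by
  simp only [oRe, omul, oconj, star_neg, neg_mul, sub_neg_eq_add, star_star, Quaternion.re_add,
    Quaternion.re_mul, Quaternion.re_star, Quaternion.imI_star, Quaternion.imJ_star,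
    Quaternion.imK_star, WithLp.prod_inner_apply, Quaternion.inner_def]
  ring

theorem oRe_oconj_omul (a b : Oct) :
    oRe (omul (oconj a) b) = inner ℝ (WithLp.toLp 2 a) (WithLp.toLp 2 b) := by
  simp only [oRe, omul, oconj, mul_neg, sub_neg_eq_add, Quaternion.re_add, Quaternion.re_mul,
    Quaternion.re_star, Quaternion.imI_star, Quaternion.imJ_star, Quaternion.imK_star,
    WithLp.prod_inner_apply, Quaternion.inner_def]
  ring

theorem onSq_eq_norm_sq (a : Oct) : onSq a = ‖WithLp.toLp 2 a‖ ^ 2 := by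
  rw [onSq, oRe_omul_oconj_s15, real_inner_self_eq_norm_sq]

theorem omul_oR (a : Oct) (r : ℝ) : omul a (oR r) = r • a := by
  ext <;> simp [omul, oR, mul_comm]

theorem onSq_oR (r : ℝ) : onSq (oR r) = r ^ 2 := by
  simp [onSq, oRe, omul, oconj, oR, sq]

theorem oR_ne_zero {r : ℝ} (hr : r ≠ 0) : oR r ≠ 0 := by
  simpa [oR, Prod.ext_iff, Quaternion.ext_iff] using hr

theorem qform_oR (A : Herm) (x : Oct) (t : ℝ) :
    qform A (x, oR t) = A.1 * onSq x + A.2.1 * t ^ 2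
      + 2 * t * inner ℝ (WithLp.toLp 2 x) (WithLp.toLp 2 A.2.2) := by
  simp only [qform, omul_oR, oRe_oconj_omul, onSq_oR, WithLp.toLp_smul, real_inner_smul_right]
  ring

theorem qform_neg_oR (A : Herm) (t : ℝ) :
    qform A (-A.2.2, oR t) = A.2.1 * t ^ 2 - 2 * onSq A.2.2 * t + A.1 * onSq A.2.2 := by
  simp only [qform_oR, onSq_eq_norm_sq, WithLp.toLp_neg, norm_neg, inner_neg_left,
    real_inner_self_eq_norm_sq]
  ring

theorem NonnegDefH.fst_nonneg {A : Herm} (hA : NonnegDefH A) : 0 ≤ A.1 := by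
  simpa [qform_oR, onSq_oR] using hA (oR 1, oR 0)

theorem NonnegDefH.snd_nonneg {A : Herm} (hA : NonnegDefH A) : 0 ≤ A.2.1 := by
  simpa [qform_oR, onSq_eq_norm_sq] using hA (0, oR 1)

theorem NonnegDefH.onSq_le_mul {A : Herm} (hA : NonnegDefH A) : onSq A.2.2 ≤ A.1 * A.2.1 := by
  have hdiscrim : discrim A.2.1 (-(2 * onSq A.2.2)) (A.1 * onSq A.2.2) ≤ 0 := by
    refine discrim_le_zero fun t ↦ ?_
    linarith [hA (-A.2.2, oR t), qform_neg_oR A t]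
  by_contra! hlt
  have hpos : 0 < onSq A.2.2 := (mul_nonneg hA.fst_nonneg hA.snd_nonneg).trans_lt hlt
  have hmul : onSq A.2.2 * (onSq A.2.2 - A.1 * A.2.1) ≤ 0 := by
    rw [discrim] at hdiscrim
    linarith
  exact hmul.not_gt (mul_pos hpos (sub_pos.2 hlt))

theorem PosDefH.nonnegDefH {A : Herm} (hA : PosDefH A) : NonnegDefH A := by
  intro ξ
  rcases eq_or_ne ξ 0 with rfl | hξ
  · simp [qform, onSq, oRe, omul]
  · exact (hA ξ hξ).le

/-- The mixed discriminant: the symmetric bilinear form that polarizes `detH`, so that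
`detH A = mixedDiscr A A`. The off-diagonal octonions are paired by the inner product of
`𝕆 ≅ ℝ⁸`, which `WithLp 2` supplies. -/
def mixedDiscr (A B : Herm) : ℝ :=
  (A.1 * B.2.1 + A.2.1 * B.1) / 2 - inner ℝ (WithLp.toLp 2 A.2.2) (WithLp.toLp 2 B.2.2)

theorem mixedDiscr_self (A : Herm) : mixedDiscr A A = detH A := by
  rw [mixedDiscr, detH, onSq_eq_norm_sq, real_inner_self_eq_norm_sq]
  ring

theorem mixedDiscr_sub_right (A B C : Herm) :
    mixedDiscr A (B - C) = mixedDiscr A B - mixedDiscr A C := by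
  simp only [mixedDiscr, Prod.fst_sub, Prod.snd_sub, WithLp.toLp_sub, inner_sub_right]
  ring

theorem otr_matMul_hermToMat (A B : Herm) :
    otr (matMul (hermToMat A) (hermToMat B)) = A.1 * B.1 + A.2.1 * B.2.1
      + 2 * inner ℝ (WithLp.toLp 2 A.2.2) (WithLp.toLp 2 B.2.2) := by
  have oRe_add (a b : Oct) : oRe (a + b) = oRe a + oRe b := rfl
  have oRe_omul_oR_oR (r s : ℝ) : oRe (omul (oR r) (oR s)) = r * s := by simp [oRe, omul, oR]
  simp only [otr, matMul, hermToMat, Fin.sum_univ_two, Matrix.cons_val_zero, Matrix.cons_val_one,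
    oRe_add, oRe_omul_oR_oR, oRe_omul_oconj_s15, oRe_oconj_omul]
  ring

theorem otr_matMul_invH (A B : Herm) :
    otr (matMul (hermToMat (invH A)) (hermToMat B)) = 2 * (mixedDiscr A B / detH A) := by
  simp only [otr_matMul_hermToMat, invH, adjH, mixedDiscr, Prod.smul_fst, Prod.smul_snd,
    smul_eq_mul, WithLp.toLp_smul, WithLp.toLp_neg, smul_neg, inner_neg_left, real_inner_smul_left]
  ring

theorem sqrt_detH_mul_sqrt_detH_le_mixedDiscr {A B : Herm} (hA : NonnegDefH A)
    (hB : NonnegDefH B) : √(detH A) * √(detH B) ≤ mixedDiscr A B := by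
  simp only [detH, onSq_eq_norm_sq]
  exact sqrt_mul_sqrt_le_sub_inner hA.fst_nonneg hA.snd_nonneg hB.fst_nonneg hB.snd_nonneg
    (onSq_eq_norm_sq _ ▸ hA.onSq_le_mul) (onSq_eq_norm_sq _ ▸ hB.onSq_le_mul)

theorem trace_inequality_general (A B : Herm) (hA : PosDefH A) (hB : NonnegDefH B) :
    otr (matMul (hermToMat (invH A)) (hermToMat (A - B)))
      ≤ (2 / √(detH A)) * (√(detH A) - √(detH B)) := by
  have hdet : 0 < detH A := hA.detH_pos
  calc otr (matMul (hermToMat (invH A)) (hermToMat (A - B)))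
      = 2 * ((detH A - mixedDiscr A B) / detH A) := by
        rw [otr_matMul_invH, mixedDiscr_sub_right, mixedDiscr_self]
    _ ≤ 2 * ((detH A - √(detH A) * √(detH B)) / detH A) := by
        gcongr
        exact sqrt_detH_mul_sqrt_detH_le_mixedDiscr hA.nonnegDefH hB
    _ = (2 / √(detH A)) * (√(detH A) - √(detH B)) := by
        have hsqrt : √(detH A) ≠ 0 := (Real.sqrt_pos.2 hdet).ne'
        field_simp
        linear_combination -√(detH B) * Real.sq_sqrt hdet.le

/-- Lemma 16.5: for positive definite octonionic Hermitian matrices A, B,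
tr(A⁻¹(A−B)) ≤ (2/√det A)·(√det A − √det B). -/
theorem trace_inequality (A B : Herm) (hA : PosDefH A) (hB : PosDefH B) :
    otr (matMul (hermToMat (invH A)) (hermToMat (A - B)))
      ≤ (2 / Real.sqrt (detH A)) * (Real.sqrt (detH A) - Real.sqrt (detH B)) := by
  exact trace_inequality_general A B hA hB.nonnegDefH
end
end
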